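/- Let a, b be positive integers with 2 ≤ a < b, let p, p̃ > 0, and let q, q̃ be even integers with 2 ≤ q ≤ b and 2 ≤ q̃ ≤ a. Suppose p > 1 - a/b. Set Z(σ) = ∫_V |x^a y^b + x^a y^{b-q} e^{-1/x^p} + x^{a-q̃} y^b e^{-1/y^{p̃}}|^σ dx dy over V = [0, r₁] × [0, r₂] with r₁, r₂ ∈ (0,1). Then lim_{σ → -1/b⁺} (bσ + 1)^{1 - (1 - a/b)/p} · Z(σ) = Ĉ, where Ĉ = ∫₀^∞ x^{-a/b} (1 - e^{-1/(q x^p)}) dx, and this improper integral converges. -/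

import Mathlib

/-!
Put `ε = b * σ + 1` and substitute `x = ε ^ (1 / p) * t`, `y = r₂ * exp (-w / ε)`. Since
`1 - (1 - a / b) / p` is exactly the power of `1 / ε` this produces, the rescaled integral equals a
factor tending to `1` times an integral over a region that increases to the quadrant as `ε → 0⁺`.
There the term carrying `exp (-1 / x ^ p)` is, relative to the leading monomial, a constant times
`exp ((q * w - t ^ (-p)) / ε)`, so it vanishes or explodes according to the side of the curve
`q * w = t ^ (-p)`, whereas the term carrying `exp (-1 / y ^ pt)` always vanishes. As the total is
raised to a power close to `-1 / b < 0`, the integrand converges to `t ^ (-a / b) * exp (-w)` below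
the curve and to `0` above it, and integrating over `w` leaves
`t ^ (-a / b) * (1 - exp (-1 / (q * t ^ p)))`.

On the region of integration `ε * t ^ p` is bounded, so the factor `exp ((q * w - t ^ (-p)) / ε)`
dominates a constant times `exp (κ * t ^ p * w)` above the curve. This yields a majorant
`(t ^ (-a / b - δ) + t ^ (-a / b + δ)) * exp (-(1 + κ * t ^ p) * w)` up to a constant, which is
integrable precisely because `0 < 1 - a / b < p`.
-/

open MeasureTheory Set Filter

/-- The function `f(x,y) = x^a y^b + x^a y^{b-q} e^{-1/x^p} + x^{a-q̃} y^b e^{-1/y^{p̃}}`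
(case (D)), with the flat exponential factors interpreted as `0` at `0`. -/
noncomputable def fD (a b q qt : ℕ) (p pt : ℝ) (x y : ℝ) : ℝ :=
  x ^ a * y ^ b + x ^ a * y ^ (b - q) * (if x = 0 then 0 else Real.exp (-1 / x ^ p)) +
    x ^ (a - qt) * y ^ b * (if y = 0 then 0 else Real.exp (-1 / y ^ pt))

open Real Topology

section ChangeOfVariables

theorem setIntegral_image_prod_image {E : Type*} [NormedAddCommGroup E] [NormedSpace ℝ E]
    {s t : Set ℝ} {f g f' g' : ℝ → ℝ} (hs : MeasurableSet s) (ht : MeasurableSet t)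
    (hf : ∀ x ∈ s, HasDerivWithinAt f (f' x) s x) (hg : ∀ y ∈ t, HasDerivWithinAt g (g' y) t y)
    (hf_inj : InjOn f s) (hg_inj : InjOn g t) (F : ℝ × ℝ → E) :
    ∫ z in (f '' s) ×ˢ (g '' t), F z =
      ∫ z in s ×ˢ t, |f' z.1 * g' z.2| • F (f z.1, g z.2) := by
  have hdet : ∀ c d : ℝ, ((ContinuousLinearMap.toSpanSingleton ℝ c).prodMap
      (ContinuousLinearMap.toSpanSingleton ℝ d)).det = c * d := fun c d =>
    (LinearMap.det_prodMap _ _).trans (by simp)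
  have hfg : ∀ z ∈ s ×ˢ t, HasFDerivWithinAt (Prod.map f g)
      ((ContinuousLinearMap.toSpanSingleton ℝ (f' z.1)).prodMap
        (ContinuousLinearMap.toSpanSingleton ℝ (g' z.2))) (s ×ˢ t) z := fun z hz =>
    ((hf z.1 hz.1).hasFDerivWithinAt.mono (fst_image_prod_subset s t)).prodMap z
      ((hg z.2 hz.2).hasFDerivWithinAt.mono (snd_image_prod_subset s t))
  rw [← prodMap_image_prod,
    integral_image_eq_integral_abs_det_fderiv_smul volume (hs.prod ht) hfg
      (hf_inj.prodMap hg_inj)]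
  simp only [hdet, Prod.map_apply']

theorem image_const_mul_exp_neg_div_Ioi {r ε : ℝ} (hr : 0 < r) (hε : 0 < ε) :
    (fun w => r * exp (-w / ε)) '' Ioi 0 = Ioo 0 r := by
  ext y
  constructor
  · rintro ⟨w, hw : 0 < w, rfl⟩
    have hlt : exp (-w / ε) < 1 := exp_lt_one_iff.2 (div_neg_of_neg_of_pos (neg_neg_of_pos hw) hε)
    exact ⟨by positivity, mul_lt_of_lt_one_right hr hlt⟩
  · rintro ⟨hy, hyr⟩
    refine ⟨-(ε * log (y / r)), ?_, ?_⟩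
    · have hlog : log (y / r) < 0 := log_neg (div_pos hy hr) ((div_lt_one hr).2 hyr)
      exact neg_pos.2 (mul_neg_of_pos_of_neg hε hlog)
    · change r * exp (-(-(ε * log (y / r))) / ε) = y
      rw [neg_neg, mul_div_cancel_left₀ _ hε.ne', exp_log (div_pos hy hr),
        mul_div_cancel₀ _ hr.ne']

theorem setIntegral_Ioo_prod_Ioo_eq {E : Type*} [NormedAddCommGroup E] [NormedSpace ℝ E]
    {k ε r₂ : ℝ} (hk : 0 < k) (hε : 0 < ε) (hr₂ : 0 < r₂) (r₁ : ℝ) (F : ℝ × ℝ → E) :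
    ∫ z in Ioo 0 r₁ ×ˢ Ioo 0 r₂, F z = ∫ z in Ioo 0 (r₁ / k) ×ˢ Ioi 0,
      (k * (r₂ * exp (-z.2 / ε) / ε)) • F (k * z.1, r₂ * exp (-z.2 / ε)) := by
  have hexp_inj : Function.Injective fun w => r₂ * exp (-w / ε) := fun v w hvw =>
    neg_injective ((div_left_inj' hε.ne').1 (exp_injective (mul_left_cancel₀ hr₂.ne' hvw)))
  rw [← image_const_mul_exp_neg_div_Ioi hr₂ hε,
    show Ioo 0 r₁ = (k * ·) '' Ioo 0 (r₁ / k) by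
      rw [image_mul_left_Ioo hk, mul_zero, mul_div_cancel₀ _ hk.ne'],
    setIntegral_image_prod_image (f' := fun _ => k)
      (g' := fun w => r₂ * (exp (-w / ε) * (-1 / ε))) measurableSet_Ioo measurableSet_Ioi
      (fun t _ => (hasDerivAt_const_mul k).hasDerivWithinAt)
      (fun w _ => (((hasDerivAt_id' w).fun_neg.div_const ε).exp.const_mul r₂).hasDerivWithinAt)
      (mul_right_injective₀ hk.ne').injOn hexp_inj.injOn]
  congr! 3 with z
  rw [abs_mul, abs_of_pos hk, abs_mul, abs_of_pos hr₂, abs_mul, abs_of_pos (exp_pos _), abs_div,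
    abs_neg, abs_one, abs_of_pos hε]
  ring

end ChangeOfVariables

section Estimates

theorem rpow_add_le_rpow_sub_add_rpow_add {t η δ : ℝ} (ht : 0 < t) (hη : |η| ≤ δ) (s : ℝ) :
    t ^ (s + η) ≤ t ^ (s - δ) + t ^ (s + δ) := by
  obtain ⟨hη₁, hη₂⟩ := abs_le.1 hη
  rcases le_total t 1 with ht1 | ht1
  · exact (rpow_le_rpow_of_exponent_ge ht ht1 (by linarith)).trans
      (le_add_of_nonneg_right (by positivity))
  · exact (rpow_le_rpow_of_exponent_le ht1 (by linarith)).trans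
      (le_add_of_nonneg_left (by positivity))

theorem integrableOn_rpow_div_one_add_mul_rpow {s p κ : ℝ} (hs : -1 < s) (hsp : s < p - 1)
    (hκ : 0 < κ) : IntegrableOn (fun t : ℝ => t ^ s / (1 + κ * t ^ p)) (Ioi 0) := by
  have hmeas : Measurable fun t : ℝ => t ^ s / (1 + κ * t ^ p) := by fun_prop
  rw [← Ioc_union_Ioi_eq_Ioi zero_le_one]
  refine IntegrableOn.union ?_ ?_
  · refine Integrable.mono' (intervalIntegral.intervalIntegrable_rpow' (a := 0) (b := 1) hs).1
      hmeas.aestronglyMeasurable ?_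
    filter_upwards [ae_restrict_mem measurableSet_Ioc] with t ⟨ht, _⟩
    rw [norm_of_nonneg (by positivity)]
    exact div_le_self (by positivity) (le_add_of_nonneg_right (by positivity))
  · refine Integrable.mono' ((integrableOn_Ioi_rpow_of_lt (a := s - p) (by linarith)
      one_pos).const_mul κ⁻¹) hmeas.aestronglyMeasurable ?_
    filter_upwards [ae_restrict_mem measurableSet_Ioi] with t (ht1 : 1 < t)
    have ht : 0 < t := one_pos.trans ht1
    rw [norm_of_nonneg (by positivity)]
    calc t ^ s / (1 + κ * t ^ p) ≤ t ^ s / (κ * t ^ p) := by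
          gcongr
          exact le_add_of_nonneg_left zero_le_one
      _ = κ⁻¹ * t ^ (s - p) := by
          rw [rpow_sub ht]
          field_simp

theorem integrableOn_rpow_mul_exp_neg_one_add_mul_rpow_mul {s p κ : ℝ} (hs : -1 < s)
    (hsp : s < p - 1) (hκ : 0 < κ) :
    IntegrableOn (fun z : ℝ × ℝ => z.1 ^ s * exp (-(1 + κ * z.1 ^ p) * z.2))
      (Ioi 0 ×ˢ Ioi 0) := by
  have hmeas : Measurable fun z : ℝ × ℝ => z.1 ^ s * exp (-(1 + κ * z.1 ^ p) * z.2) := by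
    fun_prop
  have hrate : ∀ t ∈ Ioi (0 : ℝ), -(1 + κ * t ^ p) < 0 := fun t (ht : 0 < t) =>
    neg_neg_of_pos (by positivity)
  rw [IntegrableOn, Measure.volume_eq_prod, ← Measure.prod_restrict,
    integrable_prod_iff hmeas.aestronglyMeasurable]
  constructor
  · filter_upwards [ae_restrict_mem measurableSet_Ioi] with t ht
    exact (integrableOn_exp_mul_Ioi (hrate t ht) 0).const_mul _
  · refine (integrableOn_rpow_div_one_add_mul_rpow hs hsp hκ).congr_fun (fun t ht => ?_)
      measurableSet_Ioi
    have htpos : 0 < t := ht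
    simp_rw [norm_mul, norm_of_nonneg (rpow_pos_of_pos htpos s).le, norm_of_nonneg (exp_pos _).le]
    rw [integral_const_mul, integral_exp_mul_Ioi (hrate t ht), mul_zero, exp_zero, neg_div_neg_eq,
      mul_one_div]

theorem tendsto_rpow_const_mul_self_nhdsGT_zero (c : ℝ) :
    Tendsto (fun ε : ℝ => ε ^ (c * ε)) (𝓝[>] 0) (𝓝 1) := by
  have h : Tendsto (fun ε : ℝ => exp (c * (ε * log ε))) (𝓝[>] 0) (𝓝 (exp (c * (0 * log 0)))) :=
    ((continuous_mul_log.const_mul c).rexp.tendsto 0).mono_left nhdsWithin_le_nhds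
  rw [zero_mul, mul_zero, exp_zero] at h
  refine h.congr' ?_
  filter_upwards [self_mem_nhdsWithin] with ε hε
  rw [rpow_def_of_pos hε]
  ring_nf

theorem ae_prod_snd_ne {α β : Type*} [MeasurableSpace α] [MeasurableSpace β] [MeasurableEq β]
    {μ : Measure α} {ν : Measure β} [SFinite ν] [NullSingletonClass ν] {f : α → β}
    (hf : Measurable f) : ∀ᵐ z ∂μ.prod ν, z.2 ≠ f z.1 :=
  (Measure.ae_prod_iff_ae_ae
    (measurableSet_eq_fun measurable_snd (hf.comp measurable_fst)).compl).2
    (Eventually.of_forall fun x => Measure.ae_ne ν (f x))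

end Estimates

section Rescaling

variable {a b q qt p pt r ε t w : ℝ}

/-- The two-variable function of the theorem with arbitrary real exponents, meant for `0 < x` and
`0 < y`: the monomial `x ^ a * y ^ b` perturbed by two terms that are flat along the axes. -/
noncomputable def flatMonomial (a b q qt p pt x y : ℝ) : ℝ :=
  x ^ a * y ^ b + x ^ a * y ^ (b - q) * exp (-1 / x ^ p) +
    x ^ (a - qt) * y ^ b * exp (-1 / y ^ pt)

/-- The quotient of `flatMonomial` by its leading monomial `x ^ a * y ^ b`. -/
noncomputable def flatFactor (q qt p pt x y : ℝ) : ℝ :=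
  1 + exp (-1 / x ^ p) / y ^ q + exp (-1 / y ^ pt) / x ^ qt

/-- `flatFactor` in the coordinates `x = ε ^ (1 / p) * t`, `y = r * exp (-w / ε)`, in which the
transition between its regimes `≈ 1` and `≫ 1` takes place along the fixed curve
`q * w = t ^ (-p)`. -/
noncomputable def rescaledFactor (q qt p pt r ε t w : ℝ) : ℝ :=
  flatFactor q qt p pt (ε ^ (1 / p) * t) (r * exp (-w / ε))

/-- The integrand `flatMonomial ^ σ` at `σ = (ε - 1) / b`, in the coordinates of `rescaledFactor`,
with the Jacobian included and the powers of `ε` and `r` removed. -/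
noncomputable def rescaledIntegrand (a b q qt p pt r ε : ℝ) (z : ℝ × ℝ) : ℝ :=
  z.1 ^ (a * ((ε - 1) / b)) * exp (-z.2) *
    rescaledFactor q qt p pt r ε z.1 z.2 ^ ((ε - 1) / b)

theorem flatMonomial_eq_mul_flatFactor {x y : ℝ} (hx : 0 < x) (hy : 0 < y) :
    flatMonomial a b q qt p pt x y = x ^ a * y ^ b * flatFactor q qt p pt x y := by
  rw [flatMonomial, flatFactor, rpow_sub hx, rpow_sub hy]
  ring

theorem one_le_rescaledFactor (hr : 0 < r) (hε : 0 < ε) (ht : 0 < t) :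
    1 ≤ rescaledFactor q qt p pt r ε t w := by
  rw [rescaledFactor, flatFactor, add_assoc]
  exact le_add_of_nonneg_right (by positivity)

theorem measurable_rescaledIntegrand : Measurable (rescaledIntegrand a b q qt p pt r ε) := by
  unfold rescaledIntegrand rescaledFactor flatFactor
  fun_prop

theorem rescaledFactor_eq (hp : p ≠ 0) (hr : 0 < r) (hε : 0 < ε) (ht : 0 < t) :
    rescaledFactor q qt p pt r ε t w = 1 + exp ((q * w - t ^ (-p)) / ε) / r ^ q +
      exp (-(exp (pt * w / ε) / r ^ pt)) / (ε ^ (1 / p) * t) ^ qt := by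
  have hx : (ε ^ (1 / p) * t) ^ p = ε * t ^ p := by
    rw [mul_rpow (by positivity) ht.le, ← rpow_mul hε.le, one_div_mul_cancel hp, rpow_one]
  have hy : ∀ s, (r * exp (-w / ε)) ^ s = r ^ s * exp (-(s * w / ε)) := fun s => by
    rw [mul_rpow hr.le (exp_pos _).le, ← exp_mul]
    ring_nf
  have hfirst : exp (-1 / (ε * t ^ p)) / (r ^ q * exp (-(q * w / ε))) =
      exp ((q * w - t ^ (-p)) / ε) / r ^ q := by
    rw [exp_neg, mul_comm (r ^ q), ← div_div, div_inv_eq_mul, ← exp_add, rpow_neg ht.le]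
    congr 2
    field_simp
    ring
  have hsecond : -1 / (r ^ pt * exp (-(pt * w / ε))) = -(exp (pt * w / ε) / r ^ pt) := by
    rw [exp_neg]
    field_simp
  rw [rescaledFactor, flatFactor, hx, hy, hy, hfirst, hsecond]

theorem exp_div_le_rescaledFactor (hp : p ≠ 0) (hr : 0 < r) (hε : 0 < ε) (ht : 0 < t) :
    exp ((q * w - t ^ (-p)) / ε) / r ^ q ≤ rescaledFactor q qt p pt r ε t w := by
  rw [rescaledFactor_eq hp hr hε ht, add_right_comm]
  exact le_add_of_nonneg_left (by positivity)

theorem flatMonomial_rpow_rescaled (hb : b ≠ 0) (hp : p ≠ 0) (hr : 0 < r) (hε : 0 < ε)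
    (ht : 0 < t) :
    ε ^ (1 - (1 - a / b) / p) * (ε ^ (1 / p) * (r * exp (-w / ε) / ε) *
      flatMonomial a b q qt p pt (ε ^ (1 / p) * t) (r * exp (-w / ε)) ^ ((ε - 1) / b)) =
    r ^ ε * ε ^ (a / (b * p) * ε) * rescaledIntegrand a b q qt p pt r ε (t, w) := by
  set σ := (ε - 1) / b with hσ
  set y := r * exp (-w / ε) with hy_def
  have hy : 0 < y := by positivity
  have hx : 0 < ε ^ (1 / p) * t := by positivity
  have hP : 0 < flatFactor q qt p pt (ε ^ (1 / p) * t) y :=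
    one_pos.trans_le (one_le_rescaledFactor hr hε ht)
  have hbσ : b * σ = ε - 1 := mul_div_cancel₀ _ hb
  have hyε : y * y ^ (b * σ) = r ^ ε * exp (-w) := by
    rw [hbσ, ← rpow_one_add' hy.le (by linarith), add_sub_cancel, hy_def,
      mul_rpow hr.le (exp_pos _).le, ← exp_mul, div_mul_cancel₀ _ hε.ne']
  have hεε : ε ^ (1 - (1 - a / b) / p) * ε ^ (1 / p) * ε ^ (1 / p * (a * σ)) / ε =
      ε ^ (a / (b * p) * ε) := by
    rw [← rpow_add hε, ← rpow_add hε, ← rpow_sub_one hε.ne', hσ]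
    congr 1
    field_simp
    ring
  rw [flatMonomial_eq_mul_flatFactor hx hy, mul_rpow (by positivity) hP.le,
    mul_rpow (by positivity) (by positivity), ← rpow_mul hx.le, ← rpow_mul hy.le,
    mul_rpow (by positivity) ht.le, ← rpow_mul hε.le, rescaledIntegrand, rescaledFactor, ← hy_def,
    ← hσ]
  calc _ = (ε ^ (1 - (1 - a / b) / p) * ε ^ (1 / p) * ε ^ (1 / p * (a * σ)) / ε) *
        (y * y ^ (b * σ)) * (t ^ (a * σ) * flatFactor q qt p pt (ε ^ (1 / p) * t) y ^ σ) := by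
        ring
    _ = _ := by
        rw [hεε, hyε]
        ring

theorem rpow_mul_setIntegral_flatMonomial_rpow (hb : b ≠ 0) (hp : p ≠ 0) (hr : 0 < r)
    (hε : 0 < ε) (r₁ : ℝ) :
    ε ^ (1 - (1 - a / b) / p) * ∫ z in Ioo 0 r₁ ×ˢ Ioo 0 r,
      flatMonomial a b q qt p pt z.1 z.2 ^ ((ε - 1) / b) =
    r ^ ε * ε ^ (a / (b * p) * ε) *
      ∫ z in Ioo 0 (r₁ / ε ^ (1 / p)) ×ˢ Ioi 0, rescaledIntegrand a b q qt p pt r ε z := by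
  rw [setIntegral_Ioo_prod_Ioo_eq (rpow_pos_of_pos hε (1 / p)) hε hr, ← integral_const_mul,
    ← integral_const_mul]
  exact setIntegral_congr_fun (measurableSet_Ioo.prod measurableSet_Ioi) fun z hz =>
    flatMonomial_rpow_rescaled hb hp hr hε hz.1.1

end Rescaling

section PointwiseLimit

variable {a b q qt p pt r t w : ℝ}

/-- The pointwise limit of `rescaledIntegrand` as `ε → 0⁺`, off the curve
`q * w = t ^ (-p)`. -/
noncomputable def limitIntegrand (a b q p : ℝ) : ℝ × ℝ → ℝ :=
  {z | q * z.2 < z.1 ^ (-p)}.indicator fun z => z.1 ^ (-a / b) * exp (-z.2)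

theorem tendsto_exp_neg_exp_div_rpow (qt p : ℝ) {c d : ℝ} (hc : 0 < c) (hd : 0 < d)
    (ht : 0 < t) :
    Tendsto (fun ε : ℝ => exp (-(exp (c / ε) / d)) / (ε ^ (1 / p) * t) ^ qt) (𝓝[>] 0) (𝓝 0) := by
  have h := ((tendsto_rpow_mul_exp_neg_mul_atTop_nhds_zero (1 / p * qt) (c / d)
    (div_pos hc hd)).comp tendsto_inv_nhdsGT_zero).div_const (t ^ qt)
  rw [zero_div] at h
  refine squeeze_zero' ?_ ?_ h
  · filter_upwards [self_mem_nhdsWithin] with ε (hε : 0 < ε)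
    positivity
  · filter_upwards [self_mem_nhdsWithin] with ε (hε : 0 < ε)
    have hexp : exp (-(exp (c / ε) / d)) ≤ exp (-(c / d) * ε⁻¹) := by
      rw [exp_le_exp, neg_mul, neg_le_neg_iff, div_mul_eq_mul_div, ← div_eq_mul_inv]
      gcongr
      exact (le_add_of_nonneg_right zero_le_one).trans (add_one_le_exp _)
    calc _ ≤ exp (-(c / d) * ε⁻¹) / (ε ^ (1 / p) * t) ^ qt := by gcongr
      _ = _ := by
        rw [Function.comp_apply, mul_rpow (by positivity) ht.le, ← rpow_mul hε.le,
          inv_rpow hε.le, ← div_div, div_eq_inv_mul (exp _)]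

theorem tendsto_rescaledFactor_one (hp : p ≠ 0) (hpt : 0 < pt) (hr : 0 < r) (ht : 0 < t)
    (hw : 0 < w) (h : q * w < t ^ (-p)) :
    Tendsto (fun ε => rescaledFactor q qt p pt r ε t w) (𝓝[>] 0) (𝓝 1) := by
  have hfirst : Tendsto (fun ε : ℝ => exp ((q * w - t ^ (-p)) / ε) / r ^ q) (𝓝[>] 0) (𝓝 0) := by
    simpa [div_eq_mul_inv] using (tendsto_exp_atBot.comp
      (tendsto_inv_nhdsGT_zero.const_mul_atTop_of_neg (sub_neg.2 h))).div_const (r ^ q)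
  have hsecond := tendsto_exp_neg_exp_div_rpow qt p (mul_pos hpt hw) (rpow_pos_of_pos hr pt) ht
  have hsum := (hfirst.const_add 1).add hsecond
  rw [add_zero, add_zero] at hsum
  refine hsum.congr' ?_
  filter_upwards [self_mem_nhdsWithin] with ε hε
  exact (rescaledFactor_eq hp hr hε ht).symm

theorem tendsto_rescaledFactor_atTop (hp : p ≠ 0) (hr : 0 < r) (ht : 0 < t)
    (h : t ^ (-p) < q * w) :
    Tendsto (fun ε => rescaledFactor q qt p pt r ε t w) (𝓝[>] 0) atTop := by
  have hfirst : Tendsto (fun ε : ℝ => exp ((q * w - t ^ (-p)) / ε) / r ^ q) (𝓝[>] 0) atTop :=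
    (tendsto_exp_atTop.comp (tendsto_inv_nhdsGT_zero.const_mul_atTop
      (sub_pos.2 h))).atTop_div_const (rpow_pos_of_pos hr q)
  refine tendsto_atTop_mono' _ ?_ hfirst
  filter_upwards [self_mem_nhdsWithin] with ε hε
  exact exp_div_le_rescaledFactor hp hr hε ht

theorem rpow_sub_one_div_le_rpow {x ε : ℝ} (hb : 0 < b) (hx : 1 ≤ x) (hε : ε ≤ 1 / 2) :
    x ^ ((ε - 1) / b) ≤ x ^ (-(1 / (2 * b))) := by
  refine rpow_le_rpow_of_exponent_le hx ?_
  rw [div_le_iff₀ hb]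
  field_simp
  linarith

theorem tendsto_rescaledIntegrand (hb : 0 < b) (hp : p ≠ 0) (hpt : 0 < pt) (hr : 0 < r)
    (ht : 0 < t) (hw : 0 < w) (hne : q * w ≠ t ^ (-p)) :
    Tendsto (fun ε => rescaledIntegrand a b q qt p pt r ε (t, w)) (𝓝[>] 0)
      (𝓝 (limitIntegrand a b q p (t, w))) := by
  have hσ : Tendsto (fun ε : ℝ => (ε - 1) / b) (𝓝[>] 0) (𝓝 (-1 / b)) := by
    have h : Tendsto (fun ε : ℝ => (ε - 1) / b) (𝓝 0) (𝓝 ((0 - 1) / b)) :=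
      Continuous.tendsto (by fun_prop) 0
    exact zero_sub (1 : ℝ) ▸ h.mono_left nhdsWithin_le_nhds
  have hmono : Tendsto (fun ε : ℝ => t ^ (a * ((ε - 1) / b)) * exp (-w)) (𝓝[>] 0)
      (𝓝 (t ^ (-a / b) * exp (-w))) := by
    have h := (tendsto_const_nhds (x := t)).rpow (hσ.const_mul a) (Or.inl ht.ne')
    rw [show a * (-1 / b) = -a / b by ring] at h
    exact h.mul_const _
  rcases hne.lt_or_gt with h | h
  · have hlim : limitIntegrand a b q p (t, w) = t ^ (-a / b) * exp (-w) * 1 ^ (-1 / b) := by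
      rw [limitIntegrand, indicator_of_mem (by exact h), one_rpow, mul_one]
    exact hlim ▸ hmono.mul
      ((tendsto_rescaledFactor_one hp hpt hr ht hw h).rpow hσ (Or.inl one_ne_zero))
  · have hlim : limitIntegrand a b q p (t, w) = t ^ (-a / b) * exp (-w) * 0 := by
      rw [limitIntegrand, indicator_of_notMem (by exact h.le.not_gt), mul_zero]
    refine hlim ▸ hmono.mul (squeeze_zero' ?_ ?_
      ((tendsto_rpow_neg_atTop (show 0 < 1 / (2 * b) by positivity)).comp
        (tendsto_rescaledFactor_atTop (qt := qt) (pt := pt) hp hr ht h)))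
    · filter_upwards [self_mem_nhdsWithin] with ε hε
      exact rpow_nonneg (zero_le_one.trans (one_le_rescaledFactor hr hε ht)) _
    · filter_upwards [Ioo_mem_nhdsGT (one_half_pos (α := ℝ))] with ε hε
      exact rpow_sub_one_div_le_rpow hb (one_le_rescaledFactor hr hε.1 ht) hε.2.le

theorem integral_limitIntegrand (hq : 0 < q) (ht : 0 < t) :
    ∫ w in Ioi 0, limitIntegrand a b q p (t, w) =
      t ^ (-a / b) * (1 - exp (-1 / (q * t ^ p))) := by
  have hc : 0 < t ^ (-p) / q := by positivity
  have hind : (fun w => limitIntegrand a b q p (t, w)) =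
      (Iio (t ^ (-p) / q)).indicator fun w => t ^ (-a / b) * exp (-w) := by
    ext w
    simp only [limitIntegrand, indicator, mem_ofPred_eq, mem_Iio, lt_div_iff₀ hq, mul_comm q]
  rw [hind, setIntegral_indicator measurableSet_Iio, Ioi_inter_Iio,
    ← integral_Ioc_eq_integral_Ioo, ← intervalIntegral.integral_of_le hc.le,
    intervalIntegral.integral_const_mul, intervalIntegral.integral_comp_neg (fun x => exp x),
    integral_exp, neg_zero, exp_zero, rpow_neg ht.le]
  congr 3
  field_simp

theorem integrableOn_limitIntegrand (hq : 0 < q) (hab : a / b < 1) (hp : 1 - a / b < p) :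
    IntegrableOn (limitIntegrand a b q p) (Ioi 0 ×ˢ Ioi 0) := by
  have hmeas : Measurable (limitIntegrand a b q p) :=
    Measurable.indicator (by fun_prop) (measurableSet_lt (by fun_prop) (by fun_prop))
  have hmajorant := (integrableOn_rpow_mul_exp_neg_one_add_mul_rpow_mul (s := -a / b) (p := p)
    (by rw [neg_div]; linarith) (by rw [neg_div]; linarith) hq).const_mul (exp 1)
  refine Integrable.mono' hmajorant hmeas.aestronglyMeasurable ?_
  filter_upwards [ae_restrict_mem (measurableSet_Ioi.prod measurableSet_Ioi)]
    with z ⟨(ht : 0 < z.1), _⟩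
  by_cases hz : q * z.2 < z.1 ^ (-p)
  · have hcurve : q * z.2 * z.1 ^ p < 1 := by
      rwa [rpow_neg ht.le, ← one_div, lt_div_iff₀ (rpow_pos_of_pos ht p)] at hz
    rw [limitIntegrand, indicator_of_mem (by exact hz), norm_of_nonneg (by positivity)]
    calc z.1 ^ (-a / b) * exp (-z.2)
        ≤ z.1 ^ (-a / b) * exp (1 + -(1 + q * z.1 ^ p) * z.2) := by
          gcongr
          linarith
      _ = exp 1 * (z.1 ^ (-a / b) * exp (-(1 + q * z.1 ^ p) * z.2)) := by
          rw [exp_add]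
          ring
  · rw [limitIntegrand, indicator_of_notMem (by exact hz), norm_zero]
    positivity

theorem integrableOn_rpow_mul_one_sub_exp (hq : 0 < q) (hab : a / b < 1) (hp : 1 - a / b < p) :
    IntegrableOn (fun x : ℝ => x ^ (-a / b) * (1 - exp (-1 / (q * x ^ p)))) (Ioi 0) := by
  have h := integrableOn_limitIntegrand hq hab hp
  rw [IntegrableOn, Measure.volume_eq_prod, ← Measure.prod_restrict] at h
  exact IntegrableOn.congr_fun h.integral_prod_left
    (fun t ht => integral_limitIntegrand hq ht) measurableSet_Ioi

theorem setIntegral_limitIntegrand (hq : 0 < q) (hab : a / b < 1) (hp : 1 - a / b < p) :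
    ∫ z in Ioi 0 ×ˢ Ioi 0, limitIntegrand a b q p z =
      ∫ x in Ioi 0, x ^ (-a / b) * (1 - exp (-1 / (q * x ^ p))) := by
  rw [Measure.volume_eq_prod, setIntegral_prod _ (integrableOn_limitIntegrand hq hab hp)]
  exact setIntegral_congr_fun measurableSet_Ioi fun t ht => integral_limitIntegrand hq ht

end PointwiseLimit

section Domination

variable {a b q qt p pt r ε δ M t w : ℝ}

/-- A bound for `rescaledIntegrand`, uniform in small `ε`, on the region `ε * t ^ p ≤ M`. -/
noncomputable def rescaledMajorant (a b q p r M δ : ℝ) (z : ℝ × ℝ) : ℝ :=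
  (min 1 (r ^ q)⁻¹ * exp (-1 / M)) ^ (-(1 / (2 * b))) *
    ((z.1 ^ (-a / b - δ) + z.1 ^ (-a / b + δ)) * exp (-(1 + q / (2 * b * M) * z.1 ^ p) * z.2))

theorem mul_rpow_le_of_mem_Ioo {r₁ : ℝ} (hp : 0 < p) (hε : 0 < ε)
    (ht : t ∈ Ioo 0 (r₁ / ε ^ (1 / p))) : ε * t ^ p ≤ r₁ ^ p := by
  have hx : ε ^ (1 / p) * t ≤ r₁ := by
    rw [mul_comm]
    exact ((lt_div_iff₀ (rpow_pos_of_pos hε _)).1 ht.2).le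
  have h := rpow_le_rpow (mul_nonneg (rpow_nonneg hε.le _) ht.1.le) hx hp.le
  rwa [mul_rpow (by positivity) ht.1.le, ← rpow_mul hε.le, one_div_mul_cancel hp.ne',
    rpow_one] at h

theorem min_mul_exp_le_rescaledFactor (hp : p ≠ 0) (hr : 0 < r) (hε : 0 < ε) (ht : 0 < t)
    (hεt : ε * t ^ p ≤ M) :
    min 1 (r ^ q)⁻¹ * exp ((q * w * t ^ p - 1) / M) ≤ rescaledFactor q qt p pt r ε t w := by
  have htp : 0 < t ^ p := by positivity
  have hM : 0 < M := (mul_pos hε htp).trans_le hεt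
  have hfac : (q * w * t ^ p - 1) / M = (q * w - t ^ (-p)) * (t ^ p / M) := by
    rw [rpow_neg ht.le]
    field_simp
  rw [hfac]
  rcases le_total (q * w - t ^ (-p)) 0 with h | h
  · calc min 1 (r ^ q)⁻¹ * exp ((q * w - t ^ (-p)) * (t ^ p / M)) ≤ 1 * 1 := by
          gcongr
          · exact min_le_left _ _
          · exact exp_le_one_iff.2 (mul_nonpos_of_nonpos_of_nonneg h (by positivity))
      _ ≤ rescaledFactor q qt p pt r ε t w := by
          rw [one_mul]
          exact one_le_rescaledFactor hr hε ht
  · have hrate : t ^ p / M ≤ ε⁻¹ := by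
      rw [div_le_iff₀ hM, ← div_eq_inv_mul, le_div_iff₀ hε, mul_comm]
      exact hεt
    calc min 1 (r ^ q)⁻¹ * exp ((q * w - t ^ (-p)) * (t ^ p / M))
        ≤ (r ^ q)⁻¹ * exp ((q * w - t ^ (-p)) * ε⁻¹) := by
          gcongr
          exact min_le_right _ _
      _ = exp ((q * w - t ^ (-p)) / ε) / r ^ q := by
          rw [← div_eq_mul_inv, inv_mul_eq_div]
      _ ≤ rescaledFactor q qt p pt r ε t w := exp_div_le_rescaledFactor hp hr hε ht

theorem rescaledFactor_rpow_le (hb : 0 < b) (hp : p ≠ 0) (hr : 0 < r) (hε : 0 < ε)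
    (hε_half : ε ≤ 1 / 2) (ht : 0 < t) (hεt : ε * t ^ p ≤ M) :
    rescaledFactor q qt p pt r ε t w ^ ((ε - 1) / b) ≤
      (min 1 (r ^ q)⁻¹ * exp (-1 / M)) ^ (-(1 / (2 * b))) *
        exp (-(q / (2 * b * M) * t ^ p * w)) := by
  have hM : 0 < M := (mul_pos hε (rpow_pos_of_pos ht p)).trans_le hεt
  calc rescaledFactor q qt p pt r ε t w ^ ((ε - 1) / b)
      ≤ rescaledFactor q qt p pt r ε t w ^ (-(1 / (2 * b))) :=
        rpow_sub_one_div_le_rpow hb (one_le_rescaledFactor hr hε ht) hε_half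
    _ ≤ (min 1 (r ^ q)⁻¹ * exp ((q * w * t ^ p - 1) / M)) ^ (-(1 / (2 * b))) :=
        rpow_le_rpow_of_nonpos (by positivity) (min_mul_exp_le_rescaledFactor hp hr hε ht hεt)
          (neg_nonpos.2 (by positivity))
    _ = (min 1 (r ^ q)⁻¹ * exp (-1 / M) * exp (q * w * t ^ p / M)) ^ (-(1 / (2 * b))) := by
        rw [mul_assoc (min 1 (r ^ q)⁻¹), ← exp_add, ← add_div, neg_add_eq_sub]
    _ = _ := by
        rw [mul_rpow (by positivity) (exp_pos _).le, ← exp_mul (q * w * t ^ p / M)]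
        congr 2
        field_simp

theorem norm_rescaledIntegrand_le_rescaledMajorant (hb : 0 < b) (hp : p ≠ 0) (hr : 0 < r)
    (hε : 0 < ε) (hε_half : ε ≤ 1 / 2) (hεδ : |a / b * ε| ≤ δ) {z : ℝ × ℝ} (ht : 0 < z.1)
    (hεt : ε * z.1 ^ p ≤ M) :
    ‖rescaledIntegrand a b q qt p pt r ε z‖ ≤ rescaledMajorant a b q p r M δ z := by
  have hP : 0 ≤ rescaledFactor q qt p pt r ε z.1 z.2 :=
    zero_le_one.trans (one_le_rescaledFactor hr hε ht)
  have hmono : z.1 ^ (a * ((ε - 1) / b)) ≤ z.1 ^ (-a / b - δ) + z.1 ^ (-a / b + δ) := by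
    rw [show a * ((ε - 1) / b) = -a / b + a / b * ε by ring]
    exact rpow_add_le_rpow_sub_add_rpow_add ht hεδ _
  rw [norm_of_nonneg (by unfold rescaledIntegrand; positivity), rescaledIntegrand]
  calc _ ≤ (z.1 ^ (-a / b - δ) + z.1 ^ (-a / b + δ)) * exp (-z.2) *
        ((min 1 (r ^ q)⁻¹ * exp (-1 / M)) ^ (-(1 / (2 * b))) *
          exp (-(q / (2 * b * M) * z.1 ^ p * z.2))) := by
        gcongr
        exact rescaledFactor_rpow_le hb hp hr hε hε_half ht hεt
    _ = rescaledMajorant a b q p r M δ z := by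
        rw [rescaledMajorant, show -(1 + q / (2 * b * M) * z.1 ^ p) * z.2 =
          -z.2 + -(q / (2 * b * M) * z.1 ^ p * z.2) by ring, exp_add]
        ring

theorem integrableOn_rescaledMajorant (hb : 0 < b) (hq : 0 < q) (hM : 0 < M) (hδ : 0 ≤ δ)
    (hδ_zero : δ < 1 - a / b) (hδ_top : δ < p - (1 - a / b)) (r : ℝ) :
    IntegrableOn (rescaledMajorant a b q p r M δ) (Ioi 0 ×ˢ Ioi 0) := by
  have hκ : 0 < q / (2 * b * M) := by positivity
  have hint : ∀ s, |s| ≤ δ → IntegrableOn (fun z : ℝ × ℝ =>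
      z.1 ^ (-a / b + s) * exp (-(1 + q / (2 * b * M) * z.1 ^ p) * z.2)) (Ioi 0 ×ˢ Ioi 0) :=
    fun s hs => by
      obtain ⟨hs₁, hs₂⟩ := abs_le.1 hs
      exact integrableOn_rpow_mul_exp_neg_one_add_mul_rpow_mul (by rw [neg_div]; linarith)
        (by rw [neg_div]; linarith) hκ
  refine (((hint (-δ) (by rw [abs_neg, abs_of_nonneg hδ])).add
    (hint δ (abs_of_nonneg hδ).le)).congr ?_).const_mul _
  filter_upwards with z
  rw [Pi.add_apply, add_mul, sub_eq_add_neg]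

theorem tendsto_div_rpow_nhdsGT_zero_atTop {s r₁ : ℝ} (hs : 0 < s) (hr₁ : 0 < r₁) :
    Tendsto (fun ε : ℝ => r₁ / ε ^ s) (𝓝[>] 0) atTop := by
  simp_rw [div_eq_mul_inv]
  refine Tendsto.const_mul_atTop hr₁ (tendsto_inv_nhdsGT_zero.comp ?_)
  have hzero := (continuousAt_rpow_const 0 s (Or.inr hs.le)).tendsto
  rw [zero_rpow hs.ne'] at hzero
  refine tendsto_nhdsWithin_iff.2 ⟨hzero.mono_left nhdsWithin_le_nhds, ?_⟩
  filter_upwards [self_mem_nhdsWithin] with ε hε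
  exact rpow_pos_of_pos hε s

theorem norm_indicator_rescaledIntegrand_le (hb : 0 < b) (hp : 0 < p) (hr : 0 < r) (hε : 0 < ε)
    (hε_half : ε ≤ 1 / 2) (hεδ : |a / b * ε| ≤ δ) {r₁ : ℝ} {z : ℝ × ℝ} (hz : 0 < z.1) :
    ‖(Ioo 0 (r₁ / ε ^ (1 / p)) ×ˢ Ioi 0).indicator (rescaledIntegrand a b q qt p pt r ε) z‖ ≤
      rescaledMajorant a b q p r (r₁ ^ p) δ z := by
  by_cases hzD : z ∈ Ioo 0 (r₁ / ε ^ (1 / p)) ×ˢ Ioi 0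
  · rw [indicator_of_mem hzD]
    exact norm_rescaledIntegrand_le_rescaledMajorant hb hp.ne' hr hε hε_half hεδ hz
      (mul_rpow_le_of_mem_Ioo hp hε hzD.1)
  · rw [indicator_of_notMem hzD, norm_zero, rescaledMajorant]
    positivity

theorem tendsto_indicator_rescaledIntegrand (hb : 0 < b) (hp : 0 < p) (hpt : 0 < pt)
    (hr : 0 < r) {r₁ : ℝ} (hr₁ : 0 < r₁) {z : ℝ × ℝ} (hz : z ∈ Ioi (0 : ℝ) ×ˢ Ioi (0 : ℝ))
    (hne : q * z.2 ≠ z.1 ^ (-p)) :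
    Tendsto (fun ε =>
        (Ioo 0 (r₁ / ε ^ (1 / p)) ×ˢ Ioi 0).indicator (rescaledIntegrand a b q qt p pt r ε) z)
      (𝓝[>] 0) (𝓝 (limitIntegrand a b q p z)) := by
  refine (tendsto_rescaledIntegrand (qt := qt) hb hp.ne' hpt hr hz.1 hz.2 hne).congr' ?_
  filter_upwards [(tendsto_div_rpow_nhdsGT_zero_atTop (one_div_pos.2 hp) hr₁).eventually_gt_atTop
    z.1] with ε hε
  exact (indicator_of_mem (mk_mem_prod (mem_Ioo.2 ⟨hz.1, hε⟩) hz.2) _).symm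

theorem tendsto_setIntegral_rescaledIntegrand (hb : 0 < b) (hab : a < b) (hq : 0 < q)
    (hpt : 0 < pt) (hp : 1 - a / b < p) {r₁ : ℝ} (hr₁ : 0 < r₁) (hr : 0 < r) :
    Tendsto (fun ε => ∫ z in Ioo 0 (r₁ / ε ^ (1 / p)) ×ˢ Ioi 0,
        rescaledIntegrand a b q qt p pt r ε z) (𝓝[>] 0)
      (𝓝 (∫ z in Ioi 0 ×ˢ Ioi 0, limitIntegrand a b q p z)) := by
  have hα : a / b < 1 := (div_lt_one hb).2 hab
  have hp0 : 0 < p := (sub_pos.2 hα).trans hp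
  obtain ⟨δ, hδ, hδ_lt⟩ := exists_between (lt_min (sub_pos.2 hα) (sub_pos.2 hp))
  have hdomain : ∀ ε, MeasurableSet (Ioo 0 (r₁ / ε ^ (1 / p)) ×ˢ Ioi (0 : ℝ)) := fun ε =>
    measurableSet_Ioo.prod measurableSet_Ioi
  have hquadrant : ∀ᵐ z ∂(volume : Measure (ℝ × ℝ)).restrict (Ioi 0 ×ˢ Ioi 0),
      z ∈ Ioi (0 : ℝ) ×ˢ Ioi (0 : ℝ) := ae_restrict_mem (measurableSet_Ioi.prod measurableSet_Ioi)
  have hcurve : ∀ᵐ z ∂(volume : Measure (ℝ × ℝ)), z.2 ≠ z.1 ^ (-p) / q :=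
    ae_prod_snd_ne (f := fun t : ℝ => t ^ (-p) / q) (by fun_prop)
  have hsmall : ∀ᶠ ε in 𝓝[>] (0 : ℝ), |a / b * ε| < δ := by
    refine (Continuous.tendsto' (by fun_prop) 0 0 ?_ |>.eventually_lt_const hδ).filter_mono
      nhdsWithin_le_nhds
    rw [mul_zero, abs_zero]
  have hDCT : Tendsto (fun ε => ∫ z in Ioi 0 ×ˢ Ioi 0,
      (Ioo 0 (r₁ / ε ^ (1 / p)) ×ˢ Ioi 0).indicator (rescaledIntegrand a b q qt p pt r ε) z)
      (𝓝[>] 0) (𝓝 (∫ z in Ioi 0 ×ˢ Ioi 0, limitIntegrand a b q p z)) := by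
    refine tendsto_integral_filter_of_dominated_convergence
      (rescaledMajorant a b q p r (r₁ ^ p) δ) (Eventually.of_forall fun ε =>
        (measurable_rescaledIntegrand.indicator (hdomain ε)).aestronglyMeasurable) ?_
      (integrableOn_rescaledMajorant hb hq (rpow_pos_of_pos hr₁ p) hδ.le
        (hδ_lt.trans_le (min_le_left _ _)) (hδ_lt.trans_le (min_le_right _ _)) r) ?_
    · filter_upwards [Ioo_mem_nhdsGT one_half_pos, hsmall] with ε hε hεδ
      filter_upwards [hquadrant] with z hz
      exact norm_indicator_rescaledIntegrand_le hb hp0 hr hε.1 hε.2.le hεδ.le hz.1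
    · filter_upwards [hquadrant, ae_restrict_of_ae hcurve] with z hz hne
      exact tendsto_indicator_rescaledIntegrand hb hp0 hpt hr hr₁ hz
        fun h => hne ((eq_div_iff hq.ne').2 (by rw [mul_comm, h]))
  refine hDCT.congr fun ε => ?_
  rw [setIntegral_indicator (hdomain ε),
    inter_eq_self_of_subset_right (prod_mono_left Ioo_subset_Ioi_self)]

end Domination

section MainTheorem

theorem stmt16_general (a b q qt p pt r₁ r₂ : ℝ) (hb : 0 < b) (hab : a < b) (hq : 0 < q)
    (hpt : 0 < pt) (hp : 1 - a / b < p) (hr₁ : 0 < r₁) (hr₂ : 0 < r₂) :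
    IntegrableOn (fun x : ℝ => x ^ (-a / b) * (1 - exp (-1 / (q * x ^ p)))) (Ioi 0) ∧
    Tendsto (fun σ : ℝ => (b * σ + 1) ^ (1 - (1 - a / b) / p) *
        ∫ z in Ioo 0 r₁ ×ˢ Ioo 0 r₂, flatMonomial a b q qt p pt z.1 z.2 ^ σ)
      (𝓝[>] (-1 / b)) (𝓝 (∫ x in Ioi 0, x ^ (-a / b) * (1 - exp (-1 / (q * x ^ p))))) := by
  have hα : a / b < 1 := (div_lt_one hb).2 hab
  have hp0 : p ≠ 0 := ((sub_pos.2 hα).trans hp).ne'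
  refine ⟨integrableOn_rpow_mul_one_sub_exp hq hα hp, ?_⟩
  have hprefactor : Tendsto (fun ε : ℝ => r₂ ^ ε * ε ^ (a / (b * p) * ε)) (𝓝[>] 0) (𝓝 1) := by
    have hr : Tendsto (fun ε : ℝ => r₂ ^ ε) (𝓝[>] 0) (𝓝 (r₂ ^ (0 : ℝ))) :=
      ((continuous_const_rpow hr₂.ne').tendsto 0).mono_left nhdsWithin_le_nhds
    simpa only [rpow_zero, one_mul] using hr.mul (tendsto_rpow_const_mul_self_nhdsGT_zero _)
  have hε_lim : Tendsto (fun σ : ℝ => b * σ + 1) (𝓝[>] (-1 / b)) (𝓝[>] 0) := by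
    refine tendsto_nhdsWithin_iff.2 ⟨?_, ?_⟩
    · refine (Continuous.tendsto' (by fun_prop) _ _ ?_).mono_left nhdsWithin_le_nhds
      rw [mul_div_cancel₀ _ hb.ne', neg_add_cancel]
    · filter_upwards [self_mem_nhdsWithin] with σ hσ
      have hbσ : -1 < σ * b := (div_lt_iff₀ hb).1 hσ
      rw [mem_Ioi]
      linarith
  have hlim := hprefactor.mul
    (tendsto_setIntegral_rescaledIntegrand (qt := qt) hb hab hq hpt hp hr₁ hr₂)
  rw [one_mul, setIntegral_limitIntegrand hq hα hp] at hlim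
  refine (hlim.comp hε_lim).congr' ?_
  filter_upwards [hε_lim.eventually self_mem_nhdsWithin] with σ hσ
  rw [Function.comp_apply, ← rpow_mul_setIntegral_flatMonomial_rpow hb.ne' hp0 hr₂ hσ,
    add_sub_cancel_right, mul_div_cancel_left₀ _ hb.ne']

theorem fD_eq_flatMonomial {a b q qt : ℕ} (hqb : q ≤ b) (hqta : qt ≤ a) (p pt : ℝ) {x y : ℝ}
    (hx : x ≠ 0) (hy : y ≠ 0) : fD a b q qt p pt x y = flatMonomial a b q qt p pt x y := by
  simp only [fD, flatMonomial, if_neg hx, if_neg hy, ← Nat.cast_sub hqb, ← Nat.cast_sub hqta,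
    rpow_natCast]

theorem setIntegral_abs_fD_rpow {a b q qt : ℕ} (hqb : q ≤ b) (hqta : qt ≤ a) (p pt r₁ r₂ σ : ℝ) :
    ∫ z in Icc 0 r₁ ×ˢ Icc 0 r₂, |fD a b q qt p pt z.1 z.2| ^ σ =
      ∫ z in Ioo 0 r₁ ×ˢ Ioo 0 r₂, flatMonomial a b q qt p pt z.1 z.2 ^ σ := by
  have hae : (Icc 0 r₁ ×ˢ Icc 0 r₂ : Set (ℝ × ℝ)) =ᵐ[volume] Ioo 0 r₁ ×ˢ Ioo 0 r₂ := by
    rw [Measure.volume_eq_prod]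
    exact Measure.set_prod_ae_eq Ioo_ae_eq_Icc.symm Ioo_ae_eq_Icc.symm
  rw [setIntegral_congr_set hae]
  refine setIntegral_congr_fun (measurableSet_Ioo.prod measurableSet_Ioo)
    fun z ⟨⟨hx, _⟩, ⟨hy, _⟩⟩ => ?_
  have hpos : 0 < flatMonomial a b q qt p pt z.1 z.2 := by
    unfold flatMonomial
    positivity
  simp only [fD_eq_flatMonomial hqb hqta p pt hx.ne' hy.ne', abs_of_pos hpos]

/-- If `p > 1 - a/b`, then
`lim_{σ → -1/b⁺} (bσ+1)^{1-(1-a/b)/p} ∫_V |f|^σ = Ĉ`, where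
`Ĉ = ∫₀^∞ x^{-a/b}(1 - e^{-1/(q x^p)}) dx` converges. -/
theorem stmt16 (a b q qt : ℕ) (ha : 2 ≤ a) (hab : a < b) (p pt : ℝ) (hp : 0 < p)
    (hpt : 0 < pt) (hq : Even q) (hq2 : 2 ≤ q) (hqb : q ≤ b) (hqt : Even qt)
    (hqt2 : 2 ≤ qt) (hqta : qt ≤ a) (hpcond : 1 - (a : ℝ) / b < p)
    (r₁ r₂ : ℝ) (hr₁ : r₁ ∈ Ioo (0 : ℝ) 1) (hr₂ : r₂ ∈ Ioo (0 : ℝ) 1) :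
    IntegrableOn
      (fun x : ℝ => x ^ (-(a : ℝ) / b) * (1 - Real.exp (-1 / (q * x ^ p))))
      (Ioi 0) volume ∧
    Tendsto
      (fun σ : ℝ => ((b : ℝ) * σ + 1) ^ (1 - (1 - (a : ℝ) / b) / p) *
        ∫ z in Icc (0 : ℝ) r₁ ×ˢ Icc (0 : ℝ) r₂, |fD a b q qt p pt z.1 z.2| ^ σ)
      (nhdsWithin (-1 / b) (Ioo (-1 / b) 0))
      (nhds (∫ x in Ioi (0 : ℝ), x ^ (-(a : ℝ) / b) * (1 - Real.exp (-1 / (q * x ^ p))))) := by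
  obtain ⟨hint, hlim⟩ := stmt16_general a b q qt p pt r₁ r₂ (mod_cast (by omega : 0 < b))
    (mod_cast hab) (mod_cast (by omega : 0 < q)) hpt hpcond hr₁.1 hr₂.1
  exact ⟨hint, (hlim.mono_left (nhdsWithin_mono _ Ioo_subset_Ioi_self)).congr fun σ => by
    rw [setIntegral_abs_fD_rpow hqb hqta]⟩

end MainTheorem
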